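/- Let G be a connected weighted graph on a finite vertex set V with positive edge susceptances and weighted Laplacian L, and fix a reference vertex r, so shift factors Ψ_{ℓ,v} are well defined. Let C ⊆ V be a vertex cut set, let B be the union of the vertex sets of some (but not all) connected components of G − C, and let A = V ∖ (B ∪ C), so that no edge of G joins A and B. Let {n_1, …, n_M} be the vertices of C adjacent in G to at least one vertex of B. Let line i be an edge both of whose endpoints i1, i2 lie in A ∪ C. Then for every bus p ∈ B, min{Ψ_{i,n_1}, …, Ψ_{i,n_M}} ≤ Ψ_{i,p} ≤ max{Ψ_{i,n_1}, …, Ψ_{i,n_M}}. Consequently, a pair of buses of B ∪ {n_1,…,n_M} maximizing |Ψ_{i,·} − Ψ_{i,·}| can be chosen within {n_1, …, n_M}. -/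

import Mathlib

open Matrix

/-- The weighted Laplacian of a graph on the finite vertex set `V` whose edges are
the pairs `{u,v}` with `w u v > 0`, carrying susceptance `w u v`. -/
def weightedLaplacian {V : Type*} [Fintype V] [DecidableEq V] (w : V → V → ℝ) :
    Matrix V V ℝ :=
  Matrix.of fun u v => if u = v then ∑ x, w u x else -(w u v)

theorem weightedLaplacian_mulVec_apply {V : Type*} [Fintype V] [DecidableEq V]
    {w : V → V → ℝ} (hdiag : ∀ v, w v v = 0) (f : V → ℝ) (u : V) :
    (weightedLaplacian w *ᵥ f) u = ∑ x, w u x * (f u - f x) := by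
  have h : ∀ x, weightedLaplacian w u x * f x =
      (if u = x then (∑ y, w u y) * f u else 0) - w u x * f x := by
    intro x
    by_cases hux : u = x
    · subst hux
      simp [weightedLaplacian, hdiag]
    · simp [weightedLaplacian, hux]
  simp only [Matrix.mulVec, dotProduct, h, mul_sub, Finset.sum_sub_distrib, Finset.sum_mul]
  simp

theorem weightedLaplacian_isSymm {V : Type*} [Fintype V] [DecidableEq V]
    {w : V → V → ℝ} (hsym : ∀ u v, w u v = w v u) : (weightedLaplacian w).IsSymm := by
  ext u v
  by_cases h : u = v
  · subst h
    rfl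
  · simp [weightedLaplacian, h, Ne.symm h, hsym u v]

/-- Reciprocity: the grounded Green's function of a symmetric matrix is symmetric. -/
theorem Matrix.IsSymm.green_comm {V : Type*} [Fintype V] [DecidableEq V]
    {L : Matrix V V ℝ} (hL : L.IsSymm) {r : V} {Θ : V → V → ℝ} (hΘr : ∀ v, Θ v r = 0)
    (hΘ : ∀ v, L *ᵥ Θ v = Pi.single v 1 - Pi.single r 1) (u v : V) :
    Θ u v = Θ v u := by
  have h : Θ u ⬝ᵥ (L *ᵥ Θ v) = Θ v ⬝ᵥ (L *ᵥ Θ u) := by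
    rw [Matrix.dotProduct_mulVec, ← Matrix.mulVec_transpose, hL.eq, dotProduct_comm]
  simpa [hΘ, dotProduct_sub, hΘr] using h

/-- Maximum principle: a function harmonic on `B` is bounded on `B` by its values on the
outer boundary of `B`. -/
theorem exists_boundary_le_of_harmonicOn {V : Type*} [Fintype V]
    {w : V → V → ℝ} (hsym : ∀ u v, w u v = w v u) (hnonneg : ∀ u v, 0 ≤ w u v)
    (hconn : (SimpleGraph.fromRel fun u v => 0 < w u v).Connected)
    {B N : Finset V} {a : V} (ha : a ∉ B)
    (hnbr : ∀ b ∈ B, ∀ x, 0 < w b x → x ∈ B ∨ x ∈ N)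
    {f : V → ℝ} (hf : ∀ b ∈ B, ∑ x, w b x * (f b - f x) = 0) {p : V} (hp : p ∈ B) :
    ∃ n ∈ N, f p ≤ f n := by
  by_contra! hlt
  obtain ⟨m, hmB, hm⟩ := B.exists_max_image f ⟨p, hp⟩
  have hclosed : ∀ b x, b ∈ B ∧ f b = f m → 0 < w b x → x ∈ B ∧ f x = f m := by
    rintro b x ⟨hb, hbm⟩ hx
    have hle : ∀ y, 0 < w b y → f y ≤ f m := fun y hy =>
      (hnbr b hb y hy).elim (hm y) fun hyN => (hlt y hyN).le.trans (hm p hp)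
    have hterm : ∀ y ∈ Finset.univ, 0 ≤ w b y * (f b - f y) := by
      intro y _
      rcases (hnonneg b y).eq_or_lt with h0 | h0
      · simp [← h0]
      · exact mul_nonneg h0.le (by linarith [hle y h0])
    have hzero := (Finset.sum_eq_zero_iff_of_nonneg hterm).1 (hf b hb) x (Finset.mem_univ x)
    have hxm : f x = f m := by
      rcases mul_eq_zero.1 hzero with h | h <;> linarith
    refine ⟨(hnbr b hb x hx).resolve_right fun hxN => ?_, hxm⟩
    linarith [hlt x hxN, hm p hp]
  have hwalk : ∀ u v, (SimpleGraph.fromRel fun u v => 0 < w u v).Walk u v →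
      u ∈ B ∧ f u = f m → v ∈ B ∧ f v = f m := by
    intro u v q
    induction q with
    | nil => exact id
    | cons hadj _ ih =>
      intro hu
      refine ih (hclosed _ _ hu ?_)
      rcases ((SimpleGraph.fromRel_adj _ _ _).1 hadj).2 with h | h
      · exact h
      · rwa [hsym]
  obtain ⟨q⟩ := hconn.preconnected m a
  exact ha (hwalk m a q ⟨hmB, rfl⟩).1

/-- Proposition 1.  Decompose the connected grid by a vertex cut set `C`: `B` is a
union of some (but not all) of the connected components of `G − C`, `A = V ∖ (B ∪ C)`
is nonempty, and no edge joins `A` and `B`.  Let `N` be the set of cut vertices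
adjacent to `B`, and let line `i` be an edge with both endpoints in `A ∪ C`.  Then
for every bus `p ∈ B`, the shift factor `Ψ_{i,p}` lies between the minimum and the
maximum of the shift factors `Ψ_{i,n}` over `n ∈ N`; consequently a pair of buses of
`B ∪ N` maximizing `|Ψ_{i,·} − Ψ_{i,·}|` can be chosen inside `N`. -/
theorem optimal_pair_in_vertex_cut_set {V : Type*} [Fintype V] [DecidableEq V]
    (w : V → V → ℝ)
    (hsym : ∀ u v, w u v = w v u)
    (hdiag : ∀ v, w v v = 0)
    (hnonneg : ∀ u v, 0 ≤ w u v)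
    (hconn : (SimpleGraph.fromRel fun u v => 0 < w u v).Connected)
    -- the reference bus and the nodal angles defining the shift factors
    (r : V) (Θ : V → V → ℝ)
    (hΘr : ∀ v, Θ v r = 0)
    (hΘ : ∀ v, weightedLaplacian w *ᵥ Θ v = Pi.single v 1 - Pi.single r 1)
    -- the vertex cut set `C` and the decomposition `V = A ∪ C ∪ B`
    (C B : Finset V) (hCB : Disjoint C B) (hB : B.Nonempty)
    (A : Finset V) (hA : A = (C ∪ B)ᶜ) (hAne : A.Nonempty)
    (hsep : ∀ a ∈ A, ∀ b ∈ B, w a b = 0)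
    -- the cut vertices adjacent to `B`
    (N : Finset V) (hN : N = C.filter fun n => ∃ b ∈ B, 0 < w n b)
    -- line `i`, an edge with both endpoints in `A ∪ C`
    (i1 i2 : V) (hi : 0 < w i1 i2) (hi1 : i1 ∈ A ∪ C) (hi2 : i2 ∈ A ∪ C)
    -- the shift factor of line `i` with respect to injection at bus `v`
    (Ψ : V → ℝ) (hΨ : ∀ v, Ψ v = w i1 i2 * (Θ v i2 - Θ v i1)) :
    (∀ p ∈ B, (∃ n1 ∈ N, Ψ n1 ≤ Ψ p) ∧ (∃ n2 ∈ N, Ψ p ≤ Ψ n2)) ∧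
    (∃ u ∈ N, ∃ v ∈ N, ∀ x ∈ B ∪ N, ∀ y ∈ B ∪ N, |Ψ x - Ψ y| ≤ |Ψ u - Ψ v|) := by
  have hmem : ∀ x, x ∈ A ↔ x ∉ C ∧ x ∉ B := by
    intro x
    simp [hA]
  have hline : ∀ x ∈ A ∪ C, x ∉ B := by
    intro x hx
    rcases Finset.mem_union.1 hx with h | h
    · exact ((hmem x).1 h).2
    · exact Finset.disjoint_left.1 hCB h
  have hΨeq : Ψ = w i1 i2 • (Θ i2 - Θ i1) := by
    funext v
    have hgreen := (weightedLaplacian_isSymm hsym).green_comm hΘr hΘ v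
    simp [hΨ, hgreen]
  have hharm : ∀ b ∈ B, ∑ x, w b x * (Ψ b - Ψ x) = 0 := by
    intro b hb
    have h1 : b ≠ i1 := fun h => hline i1 hi1 (h ▸ hb)
    have h2 : b ≠ i2 := fun h => hline i2 hi2 (h ▸ hb)
    rw [← weightedLaplacian_mulVec_apply hdiag, hΨeq, Matrix.mulVec_smul, Matrix.mulVec_sub,
      hΘ, hΘ]
    simp [h1, h2]
  have hnbr : ∀ b ∈ B, ∀ x, 0 < w b x → x ∈ B ∨ x ∈ N := by
    intro b hb x hx
    by_cases hxB : x ∈ B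
    · exact Or.inl hxB
    by_cases hxC : x ∈ C
    · rw [hN, Finset.mem_filter]
      exact Or.inr ⟨hxC, b, hb, hsym b x ▸ hx⟩
    · rw [hsym, hsep x ((hmem x).2 ⟨hxC, hxB⟩) b hb] at hx
      exact absurd hx (lt_irrefl 0)
  obtain ⟨a, haA⟩ := hAne
  have haB : a ∉ B := ((hmem a).1 haA).2
  have hupper : ∀ p ∈ B, ∃ n ∈ N, Ψ p ≤ Ψ n := fun p hp =>
    exists_boundary_le_of_harmonicOn hsym hnonneg hconn haB hnbr hharm hp
  have hlower : ∀ p ∈ B, ∃ n ∈ N, Ψ n ≤ Ψ p := by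
    intro p hp
    have hneg : ∀ b ∈ B, ∑ x, w b x * ((-Ψ) b - (-Ψ) x) = 0 := by
      intro b hb
      rw [← neg_eq_zero, ← Finset.sum_neg_distrib, ← hharm b hb]
      refine Finset.sum_congr rfl fun x _ => ?_
      simp only [Pi.neg_apply]
      ring
    obtain ⟨n, hn, hle⟩ :=
      exists_boundary_le_of_harmonicOn hsym hnonneg hconn haB hnbr hneg hp
    exact ⟨n, hn, neg_le_neg_iff.1 hle⟩
  refine ⟨fun p hp => ⟨hlower p hp, hupper p hp⟩, ?_⟩
  obtain ⟨b, hb⟩ := hB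
  obtain ⟨n, hn, -⟩ := hupper b hb
  obtain ⟨u, hu, hmax⟩ := N.exists_max_image Ψ ⟨n, hn⟩
  obtain ⟨v, hv, hmin⟩ := N.exists_min_image Ψ ⟨n, hn⟩
  have hbounds : ∀ x ∈ B ∪ N, Ψ v ≤ Ψ x ∧ Ψ x ≤ Ψ u := by
    intro x hx
    rcases Finset.mem_union.1 hx with h | h
    · obtain ⟨k, hk, hkx⟩ := hlower x h
      obtain ⟨l, hl, hxl⟩ := hupper x h
      exact ⟨(hmin k hk).trans hkx, hxl.trans (hmax l hl)⟩
    · exact ⟨hmin x h, hmax x h⟩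
  refine ⟨u, hu, v, hv, fun x hx y hy => ?_⟩
  obtain ⟨hvx, hxu⟩ := hbounds x hx
  obtain ⟨hvy, hyu⟩ := hbounds y hy
  refine le_trans ?_ (le_abs_self (Ψ u - Ψ v))
  rw [abs_le]
  constructor <;> linarith
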